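/- Let ε = (εₙ)_{n∈ℤ} ∈ ℓ²(ℤ) be a real sequence such that τₙ := π(n − 1/2) + εₙ is strictly increasing in n ∈ ℤ. Then for each n ∈ ℤ the symmetric limit bₙ := lim_{N→∞} Σ_{j: 1 ≤ |j−n| ≤ N} log( (τⱼ − τₙ) / (π(j−n)) ) exists (each ratio (τⱼ − τₙ)/(π(j−n)) is positive), and the sequence (bₙ)_{n∈ℤ} belongs to ℓ²(ℤ). -/

import Mathlib

/-!
Write `aₙ = εₙ / π`. The ratio `(τⱼ − τₙ) / (π (j − n))` equals `1 + xₙⱼ`, where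
`xₙⱼ = (aⱼ − aₙ) / (j − n)`. The family `xₙⱼ` is square summable over all pairs `(n, j)`, so the
quadratic remainders `log (1 + xₙⱼ) − xₙⱼ` are summable over pairs and their row sums lie in
`ℓ¹ ⊆ ℓ²`. In the linear part `∑ⱼ xₙⱼ`, the terms `aₙ / (j − n)` cancel over symmetric ranges, and
what is left is the discrete Hilbert transform `∑ⱼ aⱼ / (j − n)` of `a`. It is bounded on `ℓ²`
because distinct rows of the Hilbert matrix have inner product `2 / (j − k)²`: Schur's test applies
to this Gram matrix and yields the norm bound `π`.
-/

open Filter Topology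

noncomputable section

section General

variable {ι κ G E K : Type*}

lemma memℓp_two_iff_summable_sq {f : ι → ℝ} : Memℓp f 2 ↔ Summable fun i => f i ^ 2 := by
  rw [memℓp_gen_iff (by norm_num)]
  simp

lemma summable_mul_of_summable_sq {f g : ι → ℝ} (hf : Summable fun i => f i ^ 2)
    (hg : Summable fun i => g i ^ 2) : Summable fun i => f i * g i := by
  refine Summable.of_norm_bounded (hf.add hg) fun i => ?_
  rw [Real.norm_eq_abs, abs_mul, ← sq_abs (f i), ← sq_abs (g i)]
  nlinarith [two_mul_le_add_sq |f i| |g i|, sq_nonneg |f i|, sq_nonneg |g i|]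

lemma memℓp_one_tsum_of_summable_norm [NormedAddCommGroup E] [CompleteSpace E] {f : ι × κ → E}
    (hf : Summable fun p => ‖f p‖) : Memℓp (fun i => ∑' j, f (i, j)) 1 := by
  rw [memℓp_gen_iff (by norm_num)]
  simpa using hf.prod.of_nonneg_of_le (fun _ => norm_nonneg _)
    fun i => norm_tsum_le_tsum_norm (hf.prod_factor i)

lemma summable_mul_comp_sub [AddGroup G] {f g : G → ℝ} (hf : Summable f) (hg : Summable g)
    (hf₀ : 0 ≤ f) (hg₀ : 0 ≤ g) : Summable fun p : G × G => f p.1 * g (p.2 - p.1) :=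
  ((Equiv.refl G).prodShear fun x => Equiv.subRight x).summable_iff.2
    (hf.mul_of_nonneg hg hf₀ hg₀)

lemma div_sub_sub_pos_of_strictMono [LinearOrder ι] [Field K] [LinearOrder K]
    [IsStrictOrderedRing K] {f g : ι → K} (hf : StrictMono f) (hg : StrictMono g) {i j : ι}
    (hij : i ≠ j) : 0 < (f i - f j) / (g i - g j) := by
  rcases hij.lt_or_gt with h | h
  · exact div_pos_of_neg_of_neg (sub_neg.2 (hf h)) (sub_neg.2 (hg h))
  · exact div_pos (sub_pos.2 (hf h)) (sub_pos.2 (hg h))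

lemma sum_sum_mul_mul_le_of_symm {M : ι → ι → ℝ} (hM : ∀ i j, M i j = M j i)
    (hM₀ : ∀ i j, 0 ≤ M i j) {C : ℝ} {s : Finset ι} (hC : ∀ i ∈ s, ∑ j ∈ s, M i j ≤ C)
    (a : ι → ℝ) : ∑ i ∈ s, ∑ j ∈ s, a i * a j * M i j ≤ C * ∑ i ∈ s, a i ^ 2 := by
  calc ∑ i ∈ s, ∑ j ∈ s, a i * a j * M i j
      ≤ ∑ i ∈ s, ∑ j ∈ s, (a i ^ 2 / 2 * M i j + a j ^ 2 / 2 * M j i) := by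
        refine Finset.sum_le_sum fun i _ => Finset.sum_le_sum fun j _ => ?_
        rw [← hM i j, ← add_mul]
        exact mul_le_mul_of_nonneg_right (by linarith [two_mul_le_add_sq (a i) (a j)]) (hM₀ i j)
    _ = ∑ i ∈ s, a i ^ 2 * ∑ j ∈ s, M i j := by
        simp only [Finset.sum_add_distrib]
        rw [Finset.sum_comm (f := fun i j => a j ^ 2 / 2 * M j i), ← Finset.sum_add_distrib]
        simp only [← Finset.mul_sum]
        exact Finset.sum_congr rfl fun i _ => by ring
    _ ≤ ∑ i ∈ s, a i ^ 2 * C :=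
        Finset.sum_le_sum fun i hi => mul_le_mul_of_nonneg_left (hC i hi) (sq_nonneg _)
    _ = C * ∑ i ∈ s, a i ^ 2 := by rw [← Finset.sum_mul, mul_comm]

end General

section LogRemainder

/-- The remainder `log (1 + x) - x` of the first order expansion of the logarithm at `1`. -/
def logRemainder (x : ℝ) : ℝ := Real.log (1 + x) - x

lemma logRemainder_isBigO_sq : logRemainder =O[𝓝 0] fun x => x ^ 2 := by
  refine Asymptotics.IsBigO.of_bound 2 ?_
  filter_upwards [Metric.ball_mem_nhds (0 : ℝ) one_half_pos] with x hx
  have hx : |x| < 1 / 2 := by simpa using hx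
  have taylor_bound : |logRemainder x| ≤ |x| ^ 2 / (1 - |x|) := by
    simpa [logRemainder, add_comm, sub_eq_add_neg] using
      Real.abs_log_sub_add_sum_range_le (x := -x) (by rw [abs_neg]; linarith) 1
  rw [Real.norm_eq_abs, Real.norm_eq_abs, abs_pow]
  refine taylor_bound.trans ?_
  rw [div_le_iff₀ (by linarith)]
  nlinarith [sq_nonneg |x|]

lemma summable_logRemainder {ι : Type*} {x : ι → ℝ} (hx : Summable fun i => x i ^ 2) :
    Summable fun i => logRemainder (x i) := by
  have x_tendsto_zero : Tendsto x cofinite (𝓝 0) := by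
    rw [tendsto_zero_iff_abs_tendsto_zero]
    simpa [Function.comp_def, Real.sqrt_sq_eq_abs] using hx.tendsto_cofinite_zero.sqrt
  exact summable_of_isBigO hx (logRemainder_isBigO_sq.comp_tendsto x_tendsto_zero)

end LogRemainder

section IntegerSums

lemma tendsto_Icc_sub_add_atTop (n : ℤ) :
    Tendsto (fun N : ℕ => Finset.Icc (n - N) (n + N)) atTop atTop :=
  tendsto_atTop_finset_of_monotone (fun _ _ _ => Finset.Icc_subset_Icc (by lia) (by lia))
    fun j => ⟨(j - n).natAbs, Finset.mem_Icc.2 (by lia)⟩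

lemma sum_Icc_inv_sub_eq_zero {K : Type*} [DivisionRing K] (n : ℤ) (N : ℕ) :
    ∑ j ∈ Finset.Icc (n - (N : ℤ)) (n + N), ((j : K) - n)⁻¹ = 0 := by
  refine Finset.sum_involution (fun j _ => 2 * n - j) (fun j _ => ?_) (fun j _ hj h => hj ?_)
    (fun j hj => ?_) (fun j _ => by ring)
  · have reflect : ((2 * n - j : ℤ) : K) - n = -((j : K) - n) := by push_cast; noncomm_ring
    rw [reflect, inv_neg, add_neg_cancel]
  · obtain rfl : j = n := by lia
    simp
  · rw [Finset.mem_Icc] at hj ⊢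
    lia

variable {G : Type*} [AddCommGroup G] [TopologicalSpace G] [IsTopologicalAddGroup G]

lemma hasSum_int_sub_succ [T2Space G] {f : ℤ → G} {x y : G}
    (hf : Summable fun n => f n - f (n + 1)) (hbot : Tendsto f atBot (𝓝 x))
    (htop : Tendsto f atTop (𝓝 y)) : HasSum (fun n => f n - f (n + 1)) (x - y) := by
  have partial_sums_tendsto : Tendsto
      (fun N : ℕ => ∑ n ∈ Finset.Ico (-N : ℤ) N, (f n - f (n + 1))) atTop (𝓝 (x - y)) := by
    simp only [Finset.sum_Ico_int_sub]
    exact (hbot.comp (tendsto_neg_atTop_atBot.comp tendsto_natCast_atTop_atTop)).sub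
      (htop.comp tendsto_natCast_atTop_atTop)
  rw [← tendsto_nhds_unique (hf.hasSum.comp Finset.tendsto_Ico_neg) partial_sums_tendsto]
  exact hf.hasSum

lemma hasSum_int_sub_add_of_sub_succ {f : ℤ → G} (hf : HasSum (fun n => f n - f (n + 1)) 0)
    (d : ℤ) : HasSum (fun n => f n - f (n + d)) 0 := by
  have shifted (c : ℤ) : HasSum (fun n => f (n + c) - f (n + c + 1)) 0 :=
    (Equiv.addRight c).hasSum_iff.2 hf
  induction d using Int.induction_on with
  | zero => simp
  | succ i ih => simpa [add_assoc] using ih.add (shifted i)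
  | pred i ih => simpa [add_assoc] using ih.sub (shifted (-i - 1))

end IntegerSums

section HilbertMatrix

/-- The two correction terms account for `0⁻¹ = 0` at the poles `m = 0` and `m = -d`. -/
lemma int_inv_mul_inv_add {K : Type*} [Field K] [CharZero K] (m : ℤ) {d : ℤ} (hd : d ≠ 0) :
    (m : K)⁻¹ * ((m : K) + d)⁻¹ = (d : K)⁻¹ * ((m : K)⁻¹ - ((m : K) + d)⁻¹) +
      (if m = 0 then (d : K)⁻¹ ^ 2 else 0) + (if m = -d then (d : K)⁻¹ ^ 2 else 0) := by
  by_cases hm : m = 0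
  · simp [hm, sq]
  by_cases hmd : m = -d
  · simp [hmd, hd, sq]
  have hm' : (m : K) ≠ 0 := Int.cast_ne_zero.2 hm
  have hd' : (d : K) ≠ 0 := Int.cast_ne_zero.2 hd
  have hmd' : (m : K) + d ≠ 0 := by exact_mod_cast fun h => hmd (eq_neg_of_add_eq_zero_left h)
  rw [if_neg hm, if_neg hmd]
  field_simp
  ring

lemma hasSum_int_inv_sq : HasSum (fun m : ℤ => (m : ℝ)⁻¹ ^ 2) (Real.pi ^ 2 / 3) := by
  have h : HasSum (fun n : ℕ => (n : ℝ)⁻¹ ^ 2) (Real.pi ^ 2 / 6) := by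
    simpa using hasSum_zeta_two
  convert! HasSum.of_nat_of_neg (f := fun m : ℤ => (m : ℝ)⁻¹ ^ 2) (by simpa using h)
    (by simpa using h) using 1
  norm_num
  ring

lemma summable_int_add_inv_sq (d : ℤ) : Summable fun m : ℤ => ((m : ℝ) + d)⁻¹ ^ 2 := by
  simpa only [Function.comp_def, Equiv.coe_addRight, Int.cast_add] using
    (Equiv.addRight d).summable_iff.2 hasSum_int_inv_sq.summable

lemma hasSum_int_inv_sub_inv_succ : HasSum (fun m : ℤ => (m : ℝ)⁻¹ - ((m : ℝ) + 1)⁻¹) 0 := by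
  have product_summable : Summable fun m : ℤ => (m : ℝ)⁻¹ * ((m : ℝ) + 1)⁻¹ :=
    summable_mul_of_summable_sq hasSum_int_inv_sq.summable
      (by simpa using summable_int_add_inv_sq 1)
  have difference_summable : Summable fun m : ℤ => (m : ℝ)⁻¹ - ((m : ℝ) + 1)⁻¹ := by
    refine ((product_summable.sub (hasSum_ite_eq 0 1).summable).sub
      (hasSum_ite_eq (-1) 1).summable).congr fun m => ?_
    have partial_fractions := int_inv_mul_inv_add (K := ℝ) m one_ne_zero
    simp only [Int.cast_one, inv_one, one_pow, one_mul] at partial_fractions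
    rw [partial_fractions]
    ring
  have inv_tendsto_atTop : Tendsto (fun m : ℤ => (m : ℝ)⁻¹) atTop (𝓝 0) :=
    tendsto_inv_atTop_zero.comp tendsto_intCast_atTop_atTop
  have inv_tendsto_atBot : Tendsto (fun m : ℤ => (m : ℝ)⁻¹) atBot (𝓝 0) :=
    tendsto_inv_atBot_zero.comp (tendsto_intCast_atBot_iff.2 tendsto_id)
  simpa using hasSum_int_sub_succ (by simpa using difference_summable) inv_tendsto_atBot
    inv_tendsto_atTop

lemma hasSum_int_inv_sub_inv_add (d : ℤ) :
    HasSum (fun m : ℤ => (m : ℝ)⁻¹ - ((m : ℝ) + d)⁻¹) 0 := by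
  simpa using hasSum_int_sub_add_of_sub_succ (f := fun m : ℤ => (m : ℝ)⁻¹)
    (by simpa using hasSum_int_inv_sub_inv_succ) d

/-- The Gram matrix of the Hilbert matrix `1 / (j - n)`: its entry at `(j, k)`, the inner product
of the rows `j` and `k`, depends only on `d = k - j`. The term `2 * d⁻¹ ^ 2` vanishes at `d = 0`
since `0⁻¹ = 0`. -/
def hilbertGram (d : ℤ) : ℝ := (if d = 0 then Real.pi ^ 2 / 3 else 0) + 2 * (d : ℝ)⁻¹ ^ 2

lemma hilbertGram_nonneg (d : ℤ) : 0 ≤ hilbertGram d := by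
  unfold hilbertGram
  positivity

lemma hilbertGram_neg (d : ℤ) : hilbertGram (-d) = hilbertGram d := by
  simp [hilbertGram, inv_neg]

lemma hasSum_hilbertGram : HasSum hilbertGram (Real.pi ^ 2) := by
  convert! (hasSum_ite_eq 0 (Real.pi ^ 2 / 3)).add (hasSum_int_inv_sq.mul_left 2) using 1
  ring

lemma hasSum_int_inv_mul_inv_add (d : ℤ) :
    HasSum (fun m : ℤ => (m : ℝ)⁻¹ * ((m : ℝ) + d)⁻¹) (hilbertGram d) := by
  rcases eq_or_ne d 0 with rfl | hd
  · simpa [hilbertGram, sq] using hasSum_int_inv_sq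
  convert! (((hasSum_int_inv_sub_inv_add d).mul_left (d : ℝ)⁻¹).add
    (hasSum_ite_eq 0 ((d : ℝ)⁻¹ ^ 2))).add (hasSum_ite_eq (-d) ((d : ℝ)⁻¹ ^ 2)) using 1
  · funext m
    exact int_inv_mul_inv_add m hd
  · simp [hilbertGram, hd]
    ring

lemma hasSum_int_inv_sub_mul_inv_sub (j k : ℤ) :
    HasSum (fun n : ℤ => ((j : ℝ) - n)⁻¹ * ((k : ℝ) - n)⁻¹) (hilbertGram (k - j)) := by
  simpa [Function.comp_def] using (Equiv.subLeft j).hasSum_iff.2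
    (hasSum_int_inv_mul_inv_add (k - j))

/-- Hilbert's inequality on finite sections; the constant `π ^ 2` is sharp. -/
lemma sum_sq_sum_div_sub_le (a : ℤ → ℝ) (s t : Finset ℤ) :
    ∑ n ∈ t, (∑ j ∈ s, a j / (j - n)) ^ 2 ≤ Real.pi ^ 2 * ∑ j ∈ s, a j ^ 2 := by
  have gram_expansion : HasSum (fun n : ℤ => (∑ j ∈ s, a j / (j - n)) ^ 2)
      (∑ j ∈ s, ∑ k ∈ s, a j * a k * hilbertGram (k - j)) := by
    convert! hasSum_sum (s := s) fun j _ => hasSum_sum (s := s) fun k _ =>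
      (hasSum_int_inv_sub_mul_inv_sub j k).mul_left (a j * a k) using 2 with n
    rw [sq, Finset.sum_mul_sum]
    exact Finset.sum_congr rfl fun j _ => Finset.sum_congr rfl fun k _ => by ring
  have row_sum_le (j : ℤ) : ∑ k ∈ s, hilbertGram (k - j) ≤ Real.pi ^ 2 :=
    sum_le_hasSum s (fun k _ => hilbertGram_nonneg _)
      ((Equiv.subRight j).hasSum_iff.2 hasSum_hilbertGram)
  exact (sum_le_hasSum t (fun n _ => sq_nonneg _) gram_expansion).trans <|
    sum_sum_mul_mul_le_of_symm (fun j k => by rw [← hilbertGram_neg, neg_sub])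
      (fun j k => hilbertGram_nonneg _) (fun j _ => row_sum_le j) a

end HilbertMatrix

section DiscreteHilbert

variable {a : ℤ → ℝ}

/-- The discrete Hilbert transform `n ↦ ∑_{j ≠ n} a j / (j - n)`, up to the usual factor `1 / π`.
The term `j = n` vanishes since `x / 0 = 0`. -/
def discreteHilbert (a : ℤ → ℝ) (n : ℤ) : ℝ := ∑' j : ℤ, a j / (j - n)

lemma summable_div_sub (ha : Summable fun j => a j ^ 2) (n : ℤ) :
    Summable fun j : ℤ => a j / (j - n) := by
  simpa only [div_eq_mul_inv] using summable_mul_of_summable_sq ha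
    (by simpa [sub_eq_add_neg] using summable_int_add_inv_sq (-n))

lemma summable_sq_discreteHilbert (ha : Summable fun j => a j ^ 2) :
    Summable fun n => discreteHilbert a n ^ 2 := by
  refine summable_of_sum_le (c := Real.pi ^ 2 * ∑' j, a j ^ 2) (fun n => sq_nonneg _) fun t => ?_
  have sections_tendsto : Tendsto (fun s : Finset ℤ => ∑ n ∈ t, (∑ j ∈ s, a j / (j - n)) ^ 2)
      atTop (𝓝 (∑ n ∈ t, discreteHilbert a n ^ 2)) :=
    tendsto_finsetSum t fun n _ => (summable_div_sub ha n).hasSum.pow 2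
  refine le_of_tendsto' sections_tendsto fun s => (sum_sq_sum_div_sub_le a s t).trans ?_
  gcongr
  exact ha.sum_le_tsum s fun _ _ => sq_nonneg _

end DiscreteHilbert

section DiffQuot

variable {a : ℤ → ℝ}

/-- The difference quotient of a sequence at `n`; it is `0` at `j = n` since `0 / 0 = 0`. -/
def diffQuot (a : ℤ → ℝ) (n j : ℤ) : ℝ := (a j - a n) / (j - n)

lemma diffQuot_self (a : ℤ → ℝ) (n : ℤ) : diffQuot a n n = 0 := by simp [diffQuot]

lemma summable_sq_diffQuot (ha : Summable fun j => a j ^ 2) :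
    Summable fun p : ℤ × ℤ => diffQuot a p.1 p.2 ^ 2 := by
  have fst_summable : Summable fun p : ℤ × ℤ => a p.1 ^ 2 * ((p.2 - p.1 : ℤ) : ℝ)⁻¹ ^ 2 :=
    summable_mul_comp_sub (f := fun m => a m ^ 2) (g := fun m => (m : ℝ)⁻¹ ^ 2) ha
      hasSum_int_inv_sq.summable (fun _ => sq_nonneg _) fun _ => sq_nonneg _
  have snd_summable : Summable fun p : ℤ × ℤ => a p.2 ^ 2 * ((p.1 - p.2 : ℤ) : ℝ)⁻¹ ^ 2 :=
    (Equiv.prodComm ℤ ℤ).summable_iff.2 fst_summable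
  refine ((fst_summable.add snd_summable).mul_left 2).of_nonneg_of_le (fun _ => sq_nonneg _)
    fun p => ?_
  rw [← neg_sub p.2 p.1, Int.cast_neg, inv_neg, neg_sq, ← add_mul, ← mul_assoc, diffQuot,
    div_eq_mul_inv, mul_pow]
  push_cast
  gcongr
  linarith [two_mul_le_add_sq (a p.1) (-a p.2)]

lemma tendsto_sum_Icc_log_one_add_diffQuot (ha : Summable fun j => a j ^ 2) (n : ℤ) :
    Tendsto (fun N : ℕ => ∑ j ∈ Finset.Icc (n - (N : ℤ)) (n + N), Real.log (1 + diffQuot a n j))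
      atTop (𝓝 (discreteHilbert a n + ∑' j, logRemainder (diffQuot a n j))) := by
  have remainder_summable : Summable fun j => logRemainder (diffQuot a n j) :=
    summable_logRemainder ((summable_sq_diffQuot ha).prod_factor n)
  refine (((summable_div_sub ha n).hasSum.add remainder_summable.hasSum).comp
    (tendsto_Icc_sub_add_atTop n)).congr fun N => ?_
  have center_cancels : ∑ j ∈ Finset.Icc (n - (N : ℤ)) (n + N), a n * ((j : ℝ) - n)⁻¹ = 0 := by
    rw [← Finset.mul_sum, sum_Icc_inv_sub_eq_zero, mul_zero]
  rw [Function.comp_apply, ← sub_eq_zero, ← Finset.sum_sub_distrib, ← center_cancels]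
  refine Finset.sum_congr rfl fun j _ => ?_
  rw [logRemainder, diffQuot]
  ring

lemma memℓp_two_discreteHilbert_add_tsum_logRemainder (ha : Summable fun j => a j ^ 2) :
    Memℓp (fun n => discreteHilbert a n + ∑' j, logRemainder (diffQuot a n j)) 2 :=
  (memℓp_two_iff_summable_sq.2 (summable_sq_discreteHilbert ha)).add <|
    (memℓp_one_tsum_of_summable_norm (f := fun p : ℤ × ℤ => logRemainder (diffQuot a p.1 p.2))
      (summable_logRemainder (summable_sq_diffQuot ha)).norm).of_exponent_ge (by norm_num)

end DiffQuot

lemma div_perturbed_sub_eq_one_add_diffQuot (ε : ℤ → ℝ) {c : ℝ} (hc : c ≠ 0) (d : ℝ) {n j : ℤ}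
    (hj : j ≠ n) :
    ((c * ((j : ℝ) - d) + ε j) - (c * ((n : ℝ) - d) + ε n)) / (c * ((j : ℝ) - n)) =
      1 + diffQuot (fun n => c⁻¹ * ε n) n j := by
  have : (j : ℝ) - n ≠ 0 := sub_ne_zero.2 (Int.cast_injective.ne hj)
  rw [diffQuot]
  field_simp
  ring

/-- Given `ε ∈ ℓ²(ℤ)` with `τₙ = π(n − 1/2) + εₙ` strictly increasing, each ratio
`(τⱼ − τₙ)/(π(j−n))` (for `j ≠ n`) is positive, the symmetric limits
`bₙ = lim_{N→∞} Σ_{1 ≤ |j−n| ≤ N} log((τⱼ − τₙ)/(π(j−n)))` exist, and `(bₙ) ∈ ℓ²(ℤ)`. -/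
theorem stmt15 (ε : ℤ → ℝ) (hε : Memℓp ε 2)
    (hmono : StrictMono (fun n : ℤ => Real.pi * ((n : ℝ) - 1 / 2) + ε n)) :
    (∀ n j : ℤ, j ≠ n →
      0 < ((Real.pi * ((j : ℝ) - 1 / 2) + ε j) - (Real.pi * ((n : ℝ) - 1 / 2) + ε n)) /
        (Real.pi * ((j : ℝ) - (n : ℝ)))) ∧
    ∃ b : ℤ → ℝ,
      (∀ n : ℤ, Tendsto (fun N : ℕ =>
          ∑ j ∈ (Finset.Icc (n - (N : ℤ)) (n + (N : ℤ))).erase n,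
            Real.log (((Real.pi * ((j : ℝ) - 1 / 2) + ε j) -
              (Real.pi * ((n : ℝ) - 1 / 2) + ε n)) / (Real.pi * ((j : ℝ) - (n : ℝ)))))
        atTop (𝓝 (b n))) ∧
      Memℓp b 2 := by
  have hε' : Summable fun n => (Real.pi⁻¹ * ε n) ^ 2 :=
    memℓp_two_iff_summable_sq.1 (hε.const_mul Real.pi⁻¹)
  have cast_strictMono : StrictMono fun n : ℤ => Real.pi * (n : ℝ) :=
    Int.cast_strictMono.const_mul Real.pi_pos
  refine ⟨fun n j hj => ?_, _,
    fun n => (tendsto_sum_Icc_log_one_add_diffQuot hε' n).congr fun N => ?_,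
    memℓp_two_discreteHilbert_add_tsum_logRemainder hε'⟩
  · rw [mul_sub Real.pi (j : ℝ) n]
    exact div_sub_sub_pos_of_strictMono hmono cast_strictMono hj
  · rw [← Finset.sum_erase _ (by rw [diffQuot_self, add_zero, Real.log_one])]
    refine Finset.sum_congr rfl fun j hj => ?_
    rw [div_perturbed_sub_eq_one_add_diffQuot ε Real.pi_ne_zero _ (Finset.ne_of_mem_erase hj)]
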